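/- For every natural number n with n ∉ {1,2} and every x ∈ ℝ, the Wronskian of Ĥ_n and β_n satisfies Ĥ_n(x)·β_n'(x) − Ĥ_n'(x)·β_n(x) = C(n)·e^{x²}·(1+2x²)², where C(n) = −M₁(n) if n is odd and C(n) = M₂(n) if n is even (with M₂(0) = 1); in particular the Wronskian never vanishes, so Ĥ_n and β_n are linearly independent solutions. -/

import Mathlib

/-- Physicists' Hermite polynomials via the Rodrigues formula. -/
noncomputable def Hr (n : ℕ) (x : ℝ) : ℝ :=
  (-1) ^ n * Real.exp (x ^ 2) * iteratedDeriv n (fun t => Real.exp (-t ^ 2)) x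

/-- The function Ĥₙ. -/
noncomputable def Hhatr (n : ℕ) (x : ℝ) : ℝ :=
  Hr n x + 4 * (n : ℝ) * Hr (n - 2) x + 4 * (n : ℝ) * ((n : ℝ) - 3) * Hr (n - 4) x

/-- Even coefficients c_{2k}(n) of the generalized power series. -/
noncomputable def ceven (n k : ℕ) : ℂ :=
  if k = 0 then 1
  else if k = 1 then -(n : ℂ)
  else (-1) ^ k * 2 ^ k * (n : ℂ) * ((n : ℂ) - ((2 * (k : ℂ) - 1) ^ 2 + 1)) *
    (∏ j ∈ Finset.Icc 1 (k - 2), ((n : ℂ) - 2 * (1 + (j : ℂ)))) /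
      (Nat.factorial (2 * k) : ℂ)

/-- Odd coefficients: `codd n k` is c_{2k-1}(n), for k ≥ 1. -/
noncomputable def codd (n k : ℕ) : ℂ :=
  if k ≤ 1 then 1
  else (-1) ^ (k + 1) * 2 ^ (k - 1) * ((n : ℂ) - ((2 * ((k : ℂ) - 1)) ^ 2 + 1)) *
    (∏ j ∈ Finset.Icc 1 (k - 2), ((n : ℂ) - (2 * (1 + (j : ℂ)) - 1))) /
      (Nat.factorial (2 * k - 1) : ℂ)

/-- μₙ(z) = Σ_{k≥0} c_{2k}(n)·z^{2k}. -/
noncomputable def muF (n : ℕ) (z : ℂ) : ℂ := ∑' k : ℕ, ceven n k * z ^ (2 * k)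

/-- νₙ(z) = Σ_{k≥1} c_{2k-1}(n)·z^{2k-1}. -/
noncomputable def nuF (n : ℕ) (z : ℂ) : ℂ := ∑' k : ℕ, codd n (k + 1) * z ^ (2 * k + 1)

/-- βₙ = μₙ + νₙ. -/
noncomputable def betaF (n : ℕ) (z : ℂ) : ℂ := muF n z + nuF n z

/-- The proportionality constant M₁(n). -/
noncomputable def M1 (n : ℕ) : ℂ :=
  (-1) ^ ((n + 1) / 2) * (Nat.factorial n : ℂ) * 2 ^ ((n + 1) / 2) /
    (((n : ℂ) - 1) * ((n : ℂ) - 2) *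
      ∏ j ∈ Finset.Icc 1 ((n - 3) / 2), ((n : ℂ) - 2 * (1 + (j : ℂ)) + 1))

/-- The proportionality constant M₂(n), with M₂(0) = 1. -/
noncomputable def M2 (n : ℕ) : ℂ :=
  if n = 0 then 1
  else (-1) ^ ((n + 2) / 2) * (Nat.factorial n : ℂ) * 2 ^ (n / 2) /
    ((n : ℂ) * ((n : ℂ) - 1) * ((n : ℂ) - 2) *
      ∏ j ∈ Finset.Icc 1 ((n - 4) / 2), ((n : ℂ) - 2 * (1 + (j : ℂ))))

/-- The Wronskian constant: −M₁(n) for odd n, M₂(n) for even n. -/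
noncomputable def Cw (n : ℕ) : ℂ := if Odd n then -M1 n else M2 n

open Filter Topology

/-!
Put `p = 1 + 2x²`. For `n ≥ 3` the Hermite recurrence collapses the three-term combination defining
`Ĥₙ` to `Ĥₙ = 2 p Hₙ₋₂ + 8 x Hₙ₋₃`, and hence `Ĥₙ' = 4 n p Hₙ₋₃`. Likewise `βₙ' = p h`, where `h` is
the entire solution of the same Hermite equation `h'' = 2 x h' - 2 (n - 3) h` with `h(0) = 1` and
`h'(0) = -2 n`; its two-term coefficient recurrence is what produces the products in the
coefficients of `βₙ`.

Whenever `y' = p h` with such an `h`, the function `p h' - (6 x + 4 x³) h + 2 n y` is constant, and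
it vanishes for both `Ĥₙ` and `βₙ`. Therefore `u = Ĥₙ h₂ - h₁ βₙ`, with `h₁`, `h₂` the Hermite
functions belonging to `Ĥₙ` and `βₙ`, satisfies `p u' = (6 x + 4 x³) u`, that is
`u = u(0) e^{x²} p`, and the Wronskian is `p u`. The constant is `u(0) = Ĥₙ(0) - h₁(0)`, where only
one of the two terms survives, according to the parity of `n`.
-/

section Wronskian

theorem mul_eq_mul_of_hasDerivAt_mul {𝕜 : Type*} [RCLike 𝕜] {A : Type*}
    [NontriviallyNormedField A] [NormedAlgebra 𝕜 A] {P u v : 𝕜 → A}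
    (hu : ∀ x, HasDerivAt u (P x * u x) x) (hv : ∀ x, HasDerivAt v (P x * v x) x)
    (hv_ne : ∀ x, v x ≠ 0) (x y : 𝕜) : u x * v y = u y * v x := by
  have hquot : ∀ t, HasDerivAt (fun t => u t / v t) 0 t := fun t =>
    ((hu t).fun_div (hv t) (hv_ne t)).congr_deriv (by ring)
  have hconst : u x / v x = u y / v y :=
    is_const_of_deriv_eq_zero (fun t => (hquot t).differentiableAt) (fun t => (hquot t).deriv) x y
  rwa [div_eq_div_iff (hv_ne x) (hv_ne y)] at hconst

/-- `y` is the lift of the solution `h` of Hermite's equation with parameter `ν - 3`, through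
`y' = (1 + 2x²) h`; the constant of integration is normalised by `2 ν y(0) = -h'(0)`, which makes
`y` a solution of `(1 + 2x²) (y'' - 2 x y' + 2 ν y) = 8 x y'`. The derivative `h'` of `h` is kept as
an explicit argument. -/
structure IsHermiteLift (ν : ℂ) (y h h' : ℝ → ℂ) : Prop where
  hasDerivAt : ∀ x : ℝ, HasDerivAt y ((1 + 2 * (x : ℂ) ^ 2) * h x) x
  hasDerivAt_base : ∀ x : ℝ, HasDerivAt h (h' x) x
  hasDerivAt_base_deriv : ∀ x : ℝ, HasDerivAt h' (2 * x * h' x - 2 * (ν - 3) * h x) x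
  two_mul_apply_zero : 2 * ν * y 0 = -h' 0

theorem one_add_two_mul_sq_ne_zero (x : ℝ) : 1 + 2 * (x : ℂ) ^ 2 ≠ 0 := by
  exact_mod_cast (by positivity : 1 + 2 * x ^ 2 ≠ 0)

theorem hasDerivAt_exp_sq_mul (x : ℝ) :
    HasDerivAt (fun t : ℝ => Complex.exp ((t : ℂ) ^ 2) * (1 + 2 * (t : ℂ) ^ 2))
      ((6 * x + 4 * x ^ 3) / (1 + 2 * x ^ 2) *
        (Complex.exp ((x : ℂ) ^ 2) * (1 + 2 * (x : ℂ) ^ 2))) x := by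
  have hsq : HasDerivAt (fun z : ℂ => z ^ 2) (2 * x) x := by simpa using hasDerivAt_pow 2 (x : ℂ)
  refine ((hsq.cexp.mul ((hsq.const_mul 2).const_add 1)).congr_deriv ?_).comp_ofReal
  rw [div_mul_eq_mul_div, eq_div_iff (one_add_two_mul_sq_ne_zero x)]
  ring

namespace IsHermiteLift

variable {ν : ℂ} {y h h' y₁ h₁ h₁' y₂ h₂ h₂' : ℝ → ℂ}

theorem first_integral (H : IsHermiteLift ν y h h') (x : ℝ) :
    (1 + 2 * (x : ℂ) ^ 2) * h' x = (6 * x + 4 * x ^ 3) * h x - 2 * ν * y x := by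
  let F : ℝ → ℂ := fun t =>
    (1 + 2 * (t : ℂ) ^ 2) * h' t - (6 * t + 4 * (t : ℂ) ^ 3) * h t + 2 * ν * y t
  have hF : ∀ t, HasDerivAt F 0 t := fun t => by
    have hquad : HasDerivAt (fun s : ℝ => 1 + 2 * (s : ℂ) ^ 2) (4 * (t : ℂ)) t :=
      ((((hasDerivAt_pow 2 (t : ℂ)).const_mul 2).const_add 1).congr_deriv
        (by push_cast; ring)).comp_ofReal
    have hcubic : HasDerivAt (fun s : ℝ => 6 * (s : ℂ) + 4 * (s : ℂ) ^ 3)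
        (6 + 12 * (t : ℂ) ^ 2) t :=
      ((((hasDerivAt_id (t : ℂ)).const_mul 6).add ((hasDerivAt_pow 3 (t : ℂ)).const_mul 4)
        ).congr_deriv (by push_cast; ring)).comp_ofReal
    refine (((hquad.mul (H.hasDerivAt_base_deriv t)).sub (hcubic.mul (H.hasDerivAt_base t))).add
      ((H.hasDerivAt t).const_mul (2 * ν))).congr_deriv ?_
    ring
  have hconst : F x = F 0 :=
    is_const_of_deriv_eq_zero (fun t => (hF t).differentiableAt) (fun t => (hF t).deriv) x 0
  have hzero : F 0 = 0 := by simp [F, H.two_mul_apply_zero]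
  linear_combination hconst.trans hzero

theorem hasDerivAt_cross (H₁ : IsHermiteLift ν y₁ h₁ h₁') (H₂ : IsHermiteLift ν y₂ h₂ h₂')
    (x : ℝ) :
    HasDerivAt (fun t => y₁ t * h₂ t - h₁ t * y₂ t)
      ((6 * x + 4 * x ^ 3) / (1 + 2 * x ^ 2) * (y₁ x * h₂ x - h₁ x * y₂ x)) x := by
  have hp := one_add_two_mul_sq_ne_zero x
  refine (((H₁.hasDerivAt x).mul (H₂.hasDerivAt_base x)).sub
    ((H₁.hasDerivAt_base x).mul (H₂.hasDerivAt x))).congr_deriv ?_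
  field_simp
  linear_combination y₁ x * H₂.first_integral x - y₂ x * H₁.first_integral x

theorem wronskian_eq (H₁ : IsHermiteLift ν y₁ h₁ h₁') (H₂ : IsHermiteLift ν y₂ h₂ h₂') (x : ℝ) :
    y₁ x * deriv y₂ x - deriv y₁ x * y₂ x =
      (y₁ 0 * h₂ 0 - h₁ 0 * y₂ 0) * Complex.exp ((x : ℂ) ^ 2) * (1 + 2 * (x : ℂ) ^ 2) ^ 2 := by
  have hcross := mul_eq_mul_of_hasDerivAt_mul (H₁.hasDerivAt_cross H₂) hasDerivAt_exp_sq_mul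
    (fun t => mul_ne_zero (Complex.exp_ne_zero _) (one_add_two_mul_sq_ne_zero t)) x 0
  simp only [Complex.ofReal_zero, ne_eq, OfNat.ofNat_ne_zero, not_false_eq_true, zero_pow,
    Complex.exp_zero, mul_zero, add_zero, mul_one] at hcross
  rw [(H₁.hasDerivAt x).deriv, (H₂.hasDerivAt x).deriv]
  linear_combination (1 + 2 * (x : ℂ) ^ 2) * hcross

end IsHermiteLift

end Wronskian

section Hermite

theorem Hr_zero (x : ℝ) : Hr 0 x = 1 := by
  simp [Hr, ← Real.exp_add]

theorem hasDerivAt_Hr (n : ℕ) (x : ℝ) :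
    HasDerivAt (Hr n) (2 * x * Hr n x - Hr (n + 1) x) x := by
  have hgauss : ContDiff ℝ (n + 1) fun t : ℝ => Real.exp (-t ^ 2) := by fun_prop
  have hiter : HasDerivAt (iteratedDeriv n fun t : ℝ => Real.exp (-t ^ 2))
      (iteratedDeriv (n + 1) (fun t : ℝ => Real.exp (-t ^ 2)) x) x := by
    rw [iteratedDeriv_succ]
    exact (hgauss.differentiable_iteratedDeriv n (by exact_mod_cast n.lt_succ_self) x).hasDerivAt
  have hexp : HasDerivAt (fun t : ℝ => Real.exp (t ^ 2)) (Real.exp (x ^ 2) * (2 * x)) x := by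
    simpa using (hasDerivAt_pow 2 x).exp
  refine ((hexp.const_mul ((-1) ^ n)).mul hiter).congr_deriv ?_
  simp only [Hr]
  ring

theorem Hr_one (x : ℝ) : Hr 1 x = 2 * x := by
  have hconst : Hr 0 = fun _ => 1 := funext Hr_zero
  have hderiv := (hasDerivAt_Hr 0 x).unique (hconst ▸ hasDerivAt_const x (1 : ℝ))
  rw [Hr_zero] at hderiv
  linarith

theorem Hr_add_two (n : ℕ) (x : ℝ) :
    Hr (n + 2) x = 2 * x * Hr (n + 1) x - 2 * (n + 1) * Hr n x := by
  induction n generalizing x with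
  | zero =>
    have hlin : Hr 1 = fun t => 2 * t := funext Hr_one
    have hderiv := (hasDerivAt_Hr 1 x).unique
      (hlin ▸ (hasDerivAt_id x).const_mul (2 : ℝ))
    simp only [zero_add, Nat.cast_zero, Hr_zero]
    linarith
  | succ n ih =>
    have hlower : HasDerivAt (Hr (n + 2)) (2 * (n + 2) * Hr (n + 1) x) x := by
      rw [funext ih]
      refine ((((hasDerivAt_id x).const_mul 2).mul (hasDerivAt_Hr (n + 1) x)).sub
        ((hasDerivAt_Hr n x).const_mul (2 * ((n : ℝ) + 1)))).congr_deriv ?_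
      simp only [id]
      linear_combination -2 * x * ih x
    push_cast
    linear_combination -(hasDerivAt_Hr (n + 2) x).unique hlower

theorem hasDerivAt_Hr_succ (n : ℕ) (x : ℝ) :
    HasDerivAt (Hr (n + 1)) (2 * (n + 1) * Hr n x) x :=
  (hasDerivAt_Hr (n + 1) x).congr_deriv (by rw [Hr_add_two]; ring)

theorem hasDerivAt_deriv_Hr (n : ℕ) (x : ℝ) :
    HasDerivAt (fun t => 2 * t * Hr n t - Hr (n + 1) t)
      (2 * x * (2 * x * Hr n x - Hr (n + 1) x) - 2 * n * Hr n x) x := by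
  refine ((((hasDerivAt_id x).const_mul 2).mul (hasDerivAt_Hr n x)).sub
    (hasDerivAt_Hr_succ n x)).congr_deriv ?_
  simp only [id]
  ring

theorem Hr_odd_apply_zero (k : ℕ) : Hr (2 * k + 1) 0 = 0 := by
  induction k with
  | zero => simp [Hr_one]
  | succ k ih => rw [show 2 * (k + 1) + 1 = 2 * k + 1 + 2 by ring, Hr_add_two, ih]; ring

theorem Hr_even_apply_zero (k : ℕ) :
    Hr (2 * k) 0 = (-1) ^ k * (2 * k).factorial / k.factorial := by
  induction k with
  | zero => simp [Hr_zero]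
  | succ k ih =>
    rw [show 2 * (k + 1) = 2 * k + 2 by ring, Hr_add_two, ih]
    simp only [Nat.factorial_succ]
    push_cast
    field_simp
    ring

end Hermite

section ExceptionalHermite

theorem differentiable_Hhatr (n : ℕ) : Differentiable ℝ (Hhatr n) := fun x =>
  (((hasDerivAt_Hr n x).add ((hasDerivAt_Hr (n - 2) x).const_mul _)).add
    ((hasDerivAt_Hr (n - 4) x).const_mul _)).differentiableAt

theorem Hhatr_zero (x : ℝ) : Hhatr 0 x = 1 := by
  simp [Hhatr, Hr_zero]

theorem Hhatr_add_three (m : ℕ) (x : ℝ) :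
    Hhatr (m + 3) x = 2 * (1 + 2 * x ^ 2) * Hr (m + 1) x + 8 * x * Hr m x := by
  have hlower : 2 * (m : ℝ) * Hr (m - 1) x = 2 * x * Hr m x - Hr (m + 1) x := by
    rcases m with _ | l
    · simp [Hr_zero, Hr_one]
    · rw [Hr_add_two, Nat.add_sub_cancel]
      push_cast
      ring
  rw [Hhatr, show m + 3 - 2 = m + 1 by omega, show m + 3 - 4 = m - 1 by omega,
    Hr_add_two (m + 1), Hr_add_two m]
  push_cast
  linear_combination 2 * ((m : ℝ) + 3) * hlower

theorem hasDerivAt_Hhatr_add_three (m : ℕ) (x : ℝ) :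
    HasDerivAt (Hhatr (m + 3)) (4 * (m + 3) * (1 + 2 * x ^ 2) * Hr m x) x := by
  rw [funext (Hhatr_add_three m)]
  refine ((((((hasDerivAt_pow 2 x).const_mul 2).const_add 1).const_mul 2).mul
    (hasDerivAt_Hr_succ m x)).add
    (((hasDerivAt_id x).const_mul 8).mul (hasDerivAt_Hr m x))).congr_deriv ?_
  simp only [id]
  push_cast
  ring

theorem isHermiteLift_Hhatr_zero : IsHermiteLift 0 (fun t => (Hhatr 0 t : ℂ)) 0 0 where
  hasDerivAt x := by simpa [Hhatr_zero] using hasDerivAt_const x (1 : ℂ)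
  hasDerivAt_base x := hasDerivAt_const x 0
  hasDerivAt_base_deriv x := by simp
  two_mul_apply_zero := by simp

theorem isHermiteLift_Hhatr_add_three (m : ℕ) :
    IsHermiteLift (m + 3 : ℕ) (fun t => (Hhatr (m + 3) t : ℂ))
      (fun t => (4 * (m + 3) * Hr m t : ℝ))
      (fun t => (4 * (m + 3) * (2 * t * Hr m t - Hr (m + 1) t) : ℝ)) where
  hasDerivAt x := (hasDerivAt_Hhatr_add_three m x).ofReal_comp.congr_deriv (by push_cast; ring)
  hasDerivAt_base x := ((hasDerivAt_Hr m x).const_mul _).ofReal_comp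
  hasDerivAt_base_deriv x :=
    ((hasDerivAt_deriv_Hr m x).const_mul _).ofReal_comp.congr_deriv (by push_cast; ring)
  two_mul_apply_zero := by
    rw [Hhatr_add_three]
    push_cast
    ring

end ExceptionalHermite

section PowerSeries

theorem summable_of_norm_add_two_le {E : Type*} [NormedAddCommGroup E] [CompleteSpace E]
    {f : ℕ → E} {r : ℝ} (hr : r < 1) (hf : ∀ᶠ m in atTop, ‖f (m + 2)‖ ≤ r * ‖f m‖) :
    Summable f := by
  have heven : Tendsto (fun k : ℕ => 2 * k) atTop atTop := tendsto_id.const_mul_atTop' two_pos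
  exact (summable_of_ratio_norm_eventually_le hr (heven.eventually hf)).even_add_odd
    (summable_of_ratio_norm_eventually_le hr
      (((tendsto_add_atTop_nat 1).comp heven).eventually hf))

variable {b : ℕ → ℂ}

theorem norm_mul_pow_le_of_mem_ball {R : ℝ} {w : ℂ} (hw : w ∈ Metric.ball 0 R) (c : ℂ) (m : ℕ) :
    ‖c * w ^ m‖ ≤ ‖c * (R : ℂ) ^ m‖ := by
  have hwR : ‖w‖ ≤ ‖(R : ℂ)‖ := by
    simpa using (mem_ball_zero_iff.1 hw).le.trans (le_abs_self R)
  rw [norm_mul, norm_mul, norm_pow, norm_pow]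
  gcongr

theorem differentiable_tsum_mul_pow (hb : ∀ z : ℂ, Summable fun m => b m * z ^ m) :
    Differentiable ℂ fun w => ∑' m, b m * w ^ m := fun z => by
  obtain ⟨R, hR⟩ := exists_gt ‖z‖
  exact (Complex.differentiableOn_tsum_of_summable_norm (hb R).norm (fun m => by fun_prop)
    Metric.isOpen_ball fun m _ hw => norm_mul_pow_le_of_mem_ball hw (b m) m).differentiableAt
      (Metric.isOpen_ball.mem_nhds (mem_ball_zero_iff.2 hR))

theorem hasSum_mul_deriv_pow (hb : ∀ z : ℂ, Summable fun m => b m * z ^ m) (z : ℂ) :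
    HasSum (fun m : ℕ => b m * (m * z ^ (m - 1))) (deriv (fun w => ∑' m, b m * w ^ m) z) := by
  obtain ⟨R, hR⟩ := exists_gt ‖z‖
  simpa using Complex.hasSum_deriv_of_summable_norm (hb R).norm (fun m => by fun_prop)
    Metric.isOpen_ball (fun m _ hw => norm_mul_pow_le_of_mem_ball hw (b m) m)
      (mem_ball_zero_iff.2 hR)

theorem hasSum_deriv_tsum_mul_pow (hb : ∀ z : ℂ, Summable fun m => b m * z ^ m) (z : ℂ) :
    HasSum (fun m : ℕ => (m + 1) * b (m + 1) * z ^ m) (deriv (fun w => ∑' m, b m * w ^ m) z) := by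
  have hsum := (hasSum_nat_add_iff' 1).2 (hasSum_mul_deriv_pow hb z)
  simp only [Finset.sum_range_one, Nat.cast_zero, zero_mul, mul_zero, sub_zero,
    Nat.add_sub_cancel] at hsum
  refine hsum.congr_fun fun m => ?_
  push_cast
  ring

theorem summable_mul_pow_of_summable_deriv {z : ℂ}
    (hb : Summable fun m : ℕ => (m + 1) * b (m + 1) * z ^ m) :
    Summable fun m => b m * z ^ m := by
  rw [← summable_nat_add_iff 1]
  refine .of_norm_bounded (hb.norm.mul_left ‖z‖) fun m => ?_
  have hm : 1 ≤ ‖(m : ℂ) + 1‖ := by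
    rw [← Nat.cast_succ, Complex.norm_natCast]
    exact_mod_cast m.succ_pos
  calc ‖b (m + 1) * z ^ (m + 1)‖ = 1 * (‖z‖ * (‖b (m + 1)‖ * ‖z ^ m‖)) := by
        rw [pow_succ, norm_mul, norm_mul]; ring
    _ ≤ ‖(m : ℂ) + 1‖ * (‖z‖ * (‖b (m + 1)‖ * ‖z ^ m‖)) := by gcongr
    _ = ‖z‖ * ‖(m + 1) * b (m + 1) * z ^ m‖ := by rw [norm_mul, norm_mul]; ring

/-- Taylor coefficients at `0` of the primitive of `(1 + 2z²) * ∑ aₘ zᵐ` with value `y₀` at `0`. -/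
noncomputable def liftCoeff (y₀ : ℂ) (a : ℕ → ℂ) : ℕ → ℂ
  | 0 => y₀
  | 1 => a 0
  | 2 => a 1 / 2
  | m + 3 => (a (m + 2) + 2 * a m) / (m + 3)

theorem hasSum_deriv_liftCoeff (y₀ : ℂ) {a : ℕ → ℂ} {z s : ℂ}
    (ha : HasSum (fun m => a m * z ^ m) s) :
    HasSum (fun m : ℕ => (m + 1) * liftCoeff y₀ a (m + 1) * z ^ m) ((1 + 2 * z ^ 2) * s) := by
  rw [← hasSum_nat_add_iff' 2]
  convert ((hasSum_nat_add_iff' 2).2 ha).add (ha.mul_left (2 * z ^ 2)) using 1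
  · funext m
    have h₃ : (m : ℂ) + 3 ≠ 0 := by exact_mod_cast (m + 2).succ_ne_zero
    rw [liftCoeff]
    push_cast
    rw [add_assoc _ 2 1, two_add_one_eq_three]
    field_simp
    ring
  · simp only [Finset.sum_range_succ, Finset.sum_range_zero, liftCoeff]
    push_cast
    ring

end PowerSeries

section HermiteSeries

variable (μ a₀ a₁ : ℂ)

/-- Taylor coefficients at `0` of the solution of Hermite's equation `h'' = 2 z h' - 2 μ h` with
`h(0) = a₀` and `h'(0) = a₁`. -/
noncomputable def hermiteCoeff : ℕ → ℂ
  | 0 => a₀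
  | 1 => a₁
  | m + 2 => 2 * (m - μ) / ((m + 1) * (m + 2)) * hermiteCoeff m

/-- The entire solution of Hermite's equation `h'' = 2 z h' - 2 μ h` with `h(0) = a₀` and
`h'(0) = a₁`. -/
noncomputable def hermiteSeries (z : ℂ) : ℂ := ∑' m, hermiteCoeff μ a₀ a₁ m * z ^ m

theorem tendsto_hermiteCoeff_ratio :
    Tendsto (fun m : ℕ => 2 * ((m : ℂ) - μ) / ((m + 1) * (m + 2))) atTop (𝓝 0) := by
  have hinv : Tendsto (fun m : ℕ => 1 / ((m : ℂ) + 1)) atTop (𝓝 0) :=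
    tendsto_one_div_add_atTop_nhds_zero_nat
  have hinv' : Tendsto (fun m : ℕ => 1 / (((m + 1 : ℕ) : ℂ) + 1)) atTop (𝓝 0) :=
    hinv.comp (tendsto_add_atTop_nat 1)
  have hlim := (hinv'.const_mul 2).sub ((hinv.mul hinv').const_mul (2 * (μ + 1)))
  simp only [mul_zero, sub_zero] at hlim
  refine hlim.congr fun m => ?_
  rw [Nat.cast_succ, add_assoc, one_add_one_eq_two]
  field_simp
  ring

theorem summable_hermiteCoeff_mul_pow (z : ℂ) :
    Summable fun m => hermiteCoeff μ a₀ a₁ m * z ^ m := by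
  have hlim := ((tendsto_hermiteCoeff_ratio μ).mul_const (z ^ 2)).norm
  rw [zero_mul, norm_zero] at hlim
  refine summable_of_norm_add_two_le one_half_lt_one ?_
  filter_upwards [hlim.eventually_le_const one_half_pos] with m hm
  calc ‖hermiteCoeff μ a₀ a₁ (m + 2) * z ^ (m + 2)‖
      = ‖2 * ((m : ℂ) - μ) / ((m + 1) * (m + 2)) * z ^ 2‖ * ‖hermiteCoeff μ a₀ a₁ m * z ^ m‖ := by
        rw [hermiteCoeff, ← norm_mul]; ring_nf
    _ ≤ 1 / 2 * ‖hermiteCoeff μ a₀ a₁ m * z ^ m‖ := by gcongr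

theorem hasSum_hermiteSeries (z : ℂ) :
    HasSum (fun m => hermiteCoeff μ a₀ a₁ m * z ^ m) (hermiteSeries μ a₀ a₁ z) :=
  (summable_hermiteCoeff_mul_pow μ a₀ a₁ z).hasSum

theorem hasDerivAt_hermiteSeries (z : ℂ) :
    HasDerivAt (hermiteSeries μ a₀ a₁) (deriv (hermiteSeries μ a₀ a₁) z) z :=
  (differentiable_tsum_mul_pow (summable_hermiteCoeff_mul_pow μ a₀ a₁) z).hasDerivAt

theorem hasSum_deriv_hermiteSeries (z : ℂ) :
    HasSum (fun m : ℕ => (m + 1) * hermiteCoeff μ a₀ a₁ (m + 1) * z ^ m)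
      (deriv (hermiteSeries μ a₀ a₁) z) :=
  hasSum_deriv_tsum_mul_pow (summable_hermiteCoeff_mul_pow μ a₀ a₁) z

theorem hermiteCoeff_second_deriv_term (z : ℂ) (m : ℕ) :
    (m + 1) * (((m + 1 : ℕ) + 1) * hermiteCoeff μ a₀ a₁ (m + 1 + 1)) * z ^ m =
      2 * z * (hermiteCoeff μ a₀ a₁ m * (m * z ^ (m - 1))) -
        2 * μ * (hermiteCoeff μ a₀ a₁ m * z ^ m) := by
  have h₂ : (m : ℂ) + 2 ≠ 0 := by exact_mod_cast (m + 1).succ_ne_zero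
  have hpow : (m : ℂ) * z ^ m = m * z ^ (m - 1) * z := by
    rcases m with _ | k
    · simp
    · rw [Nat.add_sub_cancel, mul_assoc, ← pow_succ]
  rw [hermiteCoeff, Nat.cast_succ, add_assoc, one_add_one_eq_two]
  field_simp
  linear_combination hermiteCoeff μ a₀ a₁ m * hpow

theorem hasDerivAt_deriv_hermiteSeries (z : ℂ) :
    HasDerivAt (deriv (hermiteSeries μ a₀ a₁))
      (2 * z * deriv (hermiteSeries μ a₀ a₁) z - 2 * μ * hermiteSeries μ a₀ a₁ z) z := by
  have hderiv : deriv (hermiteSeries μ a₀ a₁) =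
      fun w => ∑' m : ℕ, (m + 1) * hermiteCoeff μ a₀ a₁ (m + 1) * w ^ m :=
    funext fun w => (hasSum_deriv_hermiteSeries μ a₀ a₁ w).tsum_eq.symm
  have hsummable : ∀ w : ℂ, Summable fun m : ℕ =>
      (m + 1) * hermiteCoeff μ a₀ a₁ (m + 1) * w ^ m := fun w =>
    (hasSum_deriv_hermiteSeries μ a₀ a₁ w).summable
  have hfirst := hasSum_mul_deriv_pow (summable_hermiteCoeff_mul_pow μ a₀ a₁) z
  have hode := ((hfirst.mul_left (2 * z)).sub
    ((hasSum_hermiteSeries μ a₀ a₁ z).mul_left (2 * μ))).congr_fun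
      (hermiteCoeff_second_deriv_term μ a₀ a₁ z)
  have hdiff := (differentiable_tsum_mul_pow hsummable z).hasDerivAt
  rw [(hasSum_deriv_tsum_mul_pow hsummable z).unique hode, ← hderiv] at hdiff
  exact hdiff

theorem hermiteSeries_apply_zero : hermiteSeries μ a₀ a₁ 0 = a₀ := by
  rw [hermiteSeries, tsum_eq_single 0 fun m hm => by simp [hm]]
  simp [hermiteCoeff]

theorem deriv_hermiteSeries_apply_zero : deriv (hermiteSeries μ a₀ a₁) 0 = a₁ := by
  rw [← (hasSum_deriv_hermiteSeries μ a₀ a₁ 0).tsum_eq, tsum_eq_single 0 fun m hm => by simp [hm]]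
  simp [hermiteCoeff]

theorem hermiteCoeff_two_mul (k : ℕ) :
    hermiteCoeff μ a₀ a₁ (2 * k) =
      (-2) ^ k * a₀ * (∏ j ∈ Finset.Icc 1 k, (μ + 2 - 2 * j)) / (2 * k).factorial := by
  induction k with
  | zero => simp [hermiteCoeff]
  | succ k ih =>
    rw [show 2 * (k + 1) = 2 * k + 2 by ring, hermiteCoeff, ih,
      Finset.prod_Icc_succ_top (by omega)]
    simp only [Nat.factorial_succ]
    push_cast
    rw [add_assoc _ 1 1, one_add_one_eq_two]
    field_simp
    ring

theorem hermiteCoeff_two_mul_add_one (k : ℕ) :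
    hermiteCoeff μ a₀ a₁ (2 * k + 1) =
      (-2) ^ k * a₁ * (∏ j ∈ Finset.Icc 1 k, (μ + 1 - 2 * j)) / (2 * k + 1).factorial := by
  induction k with
  | zero => simp [hermiteCoeff]
  | succ k ih =>
    rw [show 2 * (k + 1) + 1 = 2 * k + 1 + 2 by ring, hermiteCoeff, ih,
      Finset.prod_Icc_succ_top (by omega)]
    simp only [Nat.factorial_succ]
    push_cast
    field_simp
    ring

end HermiteSeries

section Beta

variable (n : ℕ)

/-- Taylor coefficients at `0` of `βₙ`, even and odd ones together, obtained by lifting the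
solution of Hermite's equation with parameter `n - 3` and initial values `1` and `-2 n`. -/
noncomputable def betaCoeff : ℕ → ℂ := liftCoeff 1 (hermiteCoeff (n - 3) 1 (-2 * n))

theorem ceven_eq_betaCoeff (k : ℕ) : ceven n k = betaCoeff n (2 * k) := by
  rcases k with _ | _ | l
  · simp [ceven, betaCoeff, liftCoeff]
  · rw [ceven, if_neg (by omega), if_pos rfl, betaCoeff]
    simp only [liftCoeff, hermiteCoeff]
    ring
  · have hprod : ∏ j ∈ Finset.Icc 1 l, ((n : ℂ) - 3 + 1 - 2 * j) =
        ∏ j ∈ Finset.Icc 1 l, ((n : ℂ) - 2 * (1 + j)) :=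
      Finset.prod_congr rfl fun j _ => by ring
    have hfactorial : ((2 * l + 1 + 3).factorial : ℂ) =
        (2 * l + 4) * (2 * l + 3) * (2 * l + 2) * (2 * l + 1).factorial := by
      rw [Nat.factorial_succ, Nat.factorial_succ, Nat.factorial_succ]
      push_cast
      ring
    have h₃ : (2 * l : ℂ) + 3 ≠ 0 := by exact_mod_cast (2 * l + 2).succ_ne_zero
    rw [ceven, if_neg (by omega), if_neg (by omega), show 2 * (l + 1 + 1) = 2 * l + 1 + 3 by ring,
      betaCoeff, liftCoeff, hermiteCoeff, hermiteCoeff_two_mul_add_one, hprod, ← mul_pow,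
      hfactorial]
    push_cast
    rw [show (2 * l + 1 + 1 : ℂ) = 2 * l + 2 by ring, show (2 * l + 1 + 2 : ℂ) = 2 * l + 3 by ring,
      show (2 * l + 1 + 3 : ℂ) = 2 * l + 4 by ring]
    field_simp
    ring

theorem codd_eq_betaCoeff (k : ℕ) : codd n (k + 1) = betaCoeff n (2 * k + 1) := by
  rcases k with _ | l
  · simp [codd, betaCoeff, liftCoeff, hermiteCoeff]
  · have hprod : ∏ j ∈ Finset.Icc 1 l, ((n : ℂ) - 3 + 2 - 2 * j) =
        ∏ j ∈ Finset.Icc 1 l, ((n : ℂ) - (2 * (1 + j) - 1)) :=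
      Finset.prod_congr rfl fun j _ => by ring
    have hfactorial : ((2 * l + 3).factorial : ℂ) =
        (2 * l + 3) * (2 * l + 2) * (2 * l + 1) * (2 * l).factorial := by
      rw [Nat.factorial_succ, Nat.factorial_succ, Nat.factorial_succ]
      push_cast
      ring
    have h₁ : (2 * l : ℂ) + 1 ≠ 0 := by exact_mod_cast (2 * l).succ_ne_zero
    rw [codd, if_neg (by omega), show 2 * (l + 1) + 1 = 2 * l + 3 by ring, betaCoeff, liftCoeff,
      hermiteCoeff, hermiteCoeff_two_mul, hprod, show 2 * (l + 1 + 1) - 1 = 2 * l + 3 by omega,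
      hfactorial, show l + 1 + 1 - 2 = l by omega, show l + 1 + 1 - 1 = l + 1 by omega,
      neg_pow (2 : ℂ) l]
    push_cast
    field_simp
    ring

theorem hasSum_deriv_betaCoeff (z : ℂ) :
    HasSum (fun m : ℕ => (m + 1) * betaCoeff n (m + 1) * z ^ m)
      ((1 + 2 * z ^ 2) * hermiteSeries (n - 3) 1 (-2 * n) z) :=
  hasSum_deriv_liftCoeff 1 (hasSum_hermiteSeries _ _ _ z)

theorem summable_betaCoeff_mul_pow (z : ℂ) : Summable fun m => betaCoeff n m * z ^ m :=
  summable_mul_pow_of_summable_deriv (hasSum_deriv_betaCoeff n z).summable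

theorem betaF_eq_tsum (z : ℂ) : betaF n z = ∑' m, betaCoeff n m * z ^ m := by
  have hsum := summable_betaCoeff_mul_pow n z
  simp only [betaF, muF, nuF, ceven_eq_betaCoeff, codd_eq_betaCoeff]
  exact tsum_even_add_odd (f := fun m => betaCoeff n m * z ^ m)
    (hsum.comp_injective (mul_right_injective₀ two_ne_zero))
    (hsum.comp_injective ((add_left_injective 1).comp (mul_right_injective₀ two_ne_zero)))

theorem hasDerivAt_betaF (z : ℂ) :
    HasDerivAt (betaF n) ((1 + 2 * z ^ 2) * hermiteSeries (n - 3) 1 (-2 * n) z) z := by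
  have hsummable := summable_betaCoeff_mul_pow n
  rw [funext (betaF_eq_tsum n),
    (hasSum_deriv_betaCoeff n z).unique (hasSum_deriv_tsum_mul_pow hsummable z)]
  exact (differentiable_tsum_mul_pow hsummable z).hasDerivAt

theorem betaF_apply_zero : betaF n 0 = 1 := by
  rw [betaF_eq_tsum, tsum_eq_single 0 fun m hm => by simp [hm]]
  simp [betaCoeff, liftCoeff]

theorem isHermiteLift_betaF :
    IsHermiteLift n (fun t => betaF n t) (fun t => hermiteSeries (n - 3) 1 (-2 * n) t)
      (fun t => deriv (hermiteSeries (n - 3) 1 (-2 * n)) t) where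
  hasDerivAt x := (hasDerivAt_betaF n x).comp_ofReal
  hasDerivAt_base x := (hasDerivAt_hermiteSeries _ _ _ (x : ℂ)).comp_ofReal
  hasDerivAt_base_deriv x := (hasDerivAt_deriv_hermiteSeries _ _ _ (x : ℂ)).comp_ofReal
  two_mul_apply_zero := by
    rw [Complex.ofReal_zero, betaF_apply_zero, deriv_hermiteSeries_apply_zero]
    ring

end Beta

section Constant

theorem prod_Icc_two_mul_sub (N k : ℕ) :
    ∏ j ∈ Finset.Icc 1 k, (2 * (N + 1 - j) : ℂ) = 2 ^ k * N.descFactorial k := by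
  induction k with
  | zero => simp
  | succ k ih =>
    rw [Finset.prod_Icc_succ_top (by omega), ih, Nat.descFactorial_succ]
    rcases le_or_gt k N with hk | hk
    · push_cast [hk]
      ring
    · simp [Nat.descFactorial_of_lt hk]

theorem M1_two_mul_add_three (k : ℕ) : M1 (2 * k + 3) = 4 * (2 * k + 3) * Hr (2 * k) 0 := by
  have hprod : ∏ j ∈ Finset.Icc 1 k, (((2 * k + 3 : ℕ) : ℂ) - 2 * (1 + j) + 1) =
      2 ^ k * k.factorial := by
    rw [← k.descFactorial_self, ← prod_Icc_two_mul_sub]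
    exact Finset.prod_congr rfl fun j _ => by push_cast; ring
  rw [M1, show (2 * k + 3 - 3) / 2 = k by omega, show (2 * k + 3 + 1) / 2 = k + 2 by omega, hprod,
    Hr_even_apply_zero]
  simp only [Nat.factorial_succ]
  have h₁ : (2 * k : ℂ) + 1 ≠ 0 := by exact_mod_cast (2 * k).succ_ne_zero
  push_cast
  rw [show (2 * k + 3 - 1 : ℂ) = 2 * (k + 1) by ring, show (2 * k + 3 - 2 : ℂ) = 2 * k + 1 by ring]
  field_simp
  ring

theorem M2_two_mul_add_four (k : ℕ) : M2 (2 * k + 4) = 2 * Hr (2 * (k + 1)) 0 := by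
  have hprod : ∏ j ∈ Finset.Icc 1 k, (((2 * k + 4 : ℕ) : ℂ) - 2 * (1 + j)) =
      2 ^ k * k.factorial := by
    rw [← k.descFactorial_self, ← prod_Icc_two_mul_sub]
    exact Finset.prod_congr rfl fun j _ => by push_cast; ring
  rw [M2, if_neg (by omega), show (2 * k + 4 - 4) / 2 = k by omega,
    show (2 * k + 4 + 2) / 2 = k + 3 by omega, show (2 * k + 4) / 2 = k + 2 by omega, hprod,
    Hr_even_apply_zero, show 2 * (k + 1) = 2 * k + 2 by ring]
  simp only [Nat.factorial_succ]
  have h₂ : (k : ℂ) + 2 ≠ 0 := by exact_mod_cast (k + 1).succ_ne_zero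
  have h₃ : (2 * k : ℂ) + 3 ≠ 0 := by exact_mod_cast (2 * k + 2).succ_ne_zero
  push_cast
  rw [show (2 * k + 4 - 1 : ℂ) = 2 * k + 3 by ring, show (2 * k + 4 - 2 : ℂ) = 2 * (k + 1) by ring,
    show (2 * k + 4 : ℂ) = 2 * (k + 2) by ring]
  field_simp
  ring

theorem Cw_zero : Cw 0 = 1 := by
  simp [Cw, M2]

theorem Cw_two_mul_add_three (k : ℕ) : Cw (2 * k + 3) = -(4 * (2 * k + 3) * Hr (2 * k) 0) := by
  rw [Cw, if_pos ⟨k + 1, by ring⟩, M1_two_mul_add_three]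

theorem Cw_two_mul_add_four (k : ℕ) : Cw (2 * k + 4) = 2 * Hr (2 * (k + 1)) 0 := by
  rw [Cw, if_neg (Nat.not_odd_iff_even.2 ⟨k + 2, by ring⟩), M2_two_mul_add_four]

theorem Cw_add_three (m : ℕ) : Cw (m + 3) = Hhatr (m + 3) 0 - (4 * (m + 3) * Hr m 0 : ℝ) := by
  rw [Hhatr_add_three]
  obtain ⟨k, rfl | rfl⟩ := m.even_or_odd'
  · rw [Cw_two_mul_add_three, Hr_odd_apply_zero]
    push_cast
    ring
  · rw [Cw_two_mul_add_four, Hr_odd_apply_zero, show 2 * k + 1 + 1 = 2 * (k + 1) by ring]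
    push_cast
    ring

theorem Cw_add_three_ne_zero (m : ℕ) : Cw (m + 3) ≠ 0 := by
  have hHr : ∀ k, (Hr (2 * k) 0 : ℂ) ≠ 0 := fun k => by
    rw [Hr_even_apply_zero]
    exact_mod_cast (by positivity : (-1 : ℝ) ^ k * (2 * k).factorial / k.factorial ≠ 0)
  obtain ⟨k, rfl | rfl⟩ := m.even_or_odd'
  · rw [Cw_two_mul_add_three]
    have h₃ : (2 * k : ℂ) + 3 ≠ 0 := by exact_mod_cast (2 * k + 2).succ_ne_zero
    exact neg_ne_zero.2 (mul_ne_zero (mul_ne_zero (by norm_num) h₃) (hHr k))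
  · rw [Cw_two_mul_add_four]
    exact mul_ne_zero two_ne_zero (hHr (k + 1))

theorem Cw_ne_zero {n : ℕ} (hn : n ∉ ({1, 2} : Set ℕ)) : Cw n ≠ 0 := by
  rcases n with _ | _ | _ | m
  · simp [Cw_zero]
  · simp at hn
  · simp at hn
  · exact Cw_add_three_ne_zero m

end Constant

theorem exists_isHermiteLift_Hhatr {n : ℕ} (hn : n ∉ ({1, 2} : Set ℕ)) :
    ∃ h h' : ℝ → ℂ, IsHermiteLift n (fun t => (Hhatr n t : ℂ)) h h' ∧
      Hhatr n 0 - h 0 = Cw n := by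
  rcases n with _ | _ | _ | m
  · exact ⟨0, 0, by simpa using isHermiteLift_Hhatr_zero, by simp [Hhatr_zero, Cw_zero]⟩
  · simp at hn
  · simp at hn
  · exact ⟨_, _, isHermiteLift_Hhatr_add_three m, (Cw_add_three m).symm⟩

theorem stmt19 (n : ℕ) (hn : n ∉ ({1, 2} : Set ℕ)) (x : ℝ) :
    ((Complex.ofReal (Hhatr n x)) * deriv (fun t : ℝ => betaF n (t : ℂ)) x
        - (Complex.ofReal (deriv (Hhatr n) x)) * betaF n (x : ℂ)
      = Cw n * Complex.exp ((x : ℂ) ^ 2) * (1 + 2 * (x : ℂ) ^ 2) ^ 2) ∧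
    ((Complex.ofReal (Hhatr n x)) * deriv (fun t : ℝ => betaF n (t : ℂ)) x
        - (Complex.ofReal (deriv (Hhatr n) x)) * betaF n (x : ℂ) ≠ 0) := by
  obtain ⟨h, h', hlift, hCw⟩ := exists_isHermiteLift_Hhatr hn
  have hwronskian := hlift.wronskian_eq (isHermiteLift_betaF n) x
  rw [Complex.ofReal_zero, betaF_apply_zero, hermiteSeries_apply_zero, mul_one, mul_one, hCw,
    (differentiable_Hhatr n x).hasDerivAt.ofReal_comp.deriv] at hwronskian
  refine ⟨hwronskian, ?_⟩
  rw [hwronskian]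
  exact mul_ne_zero (mul_ne_zero (Cw_ne_zero hn) (Complex.exp_ne_zero _))
    (pow_ne_zero 2 (one_add_two_mul_sq_ne_zero x))
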